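/- Let d ≥ 2 be an integer. If G is a finite connected simple graph in which every vertex has degree equal to 2d or to 2d − 2, then G admits an antimagic orientation. -/

import Mathlib

open Finset

/-- `A` is an orientation of the simple graph `G`: every edge of `G` receives exactly one
direction, and every arc of `A` comes from an edge of `G`. -/
def IsOrientation {V : Type*} (G : SimpleGraph V) (A : Finset (V × V)) : Prop :=
  (∀ u v : V, G.Adj u v ↔ ((u, v) ∈ A ∨ (v, u) ∈ A)) ∧
    ∀ u v : V, ¬((u, v) ∈ A ∧ (v, u) ∈ A)

/-- The vertex-sum of `u` for the arc-labeling `c`: the sum of labels of arcs entering `u`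
minus the sum of labels of arcs leaving `u`. -/
def vertexSum {V : Type*} [DecidableEq V] (A : Finset (V × V)) (c : V × V → ℤ) (u : V) : ℤ :=
  (∑ a ∈ A.filter (fun a => a.2 = u), c a) - ∑ a ∈ A.filter (fun a => a.1 = u), c a

/-!
All degrees are even, so the graph has an Euler circuit. Cut it at an even number of visits, one
for every vertex with at most one exception. Give each of the resulting segments a block of
consecutive labels, traversing the segments alternately forwards along increasing labels and
backwards along decreasing ones: a visit at which the circuit is not cut then contributes `-1` to
the vertex-sum, and a cut contributes plus or minus the sum of the two labels meeting there. A
zigzag order of the blocks around the circuit keeps the contributions of the cuts at distance at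
least `2` from each other. Any two vertices are visited almost equally often, so the `-1`s cannot
make two vertex-sums equal.
-/

section EulerianCircuit

variable {V : Type*} {G : SimpleGraph V}

lemma mem_edges_of_longest_trail {u v x : V} {p : G.Walk u v} (hp : p.IsTrail)
    (hmax : ∀ (a b : V) (q : G.Walk a b), q.IsTrail → q.length ≤ p.length) (hx : G.Adj u x) :
    s(u, x) ∈ p.edges := by
  by_contra hnot
  have hcons : (SimpleGraph.Walk.cons hx.symm p).IsTrail :=
    (SimpleGraph.Walk.isTrail_cons ..).2 ⟨hp, Sym2.eq_swap ▸ hnot⟩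
  simpa using hmax _ _ _ hcons

lemma countP_edges_eq_degree [Fintype V] [DecidableEq V] [DecidableRel G.Adj] {u v x : V}
    {p : G.Walk u v} (hp : p.IsTrail) (hx : ∀ y, G.Adj x y → s(x, y) ∈ p.edges) :
    p.edges.countP (x ∈ ·) = G.degree x := by
  rw [← SimpleGraph.card_incidenceFinset_eq_degree, List.countP_eq_length_filter,
    ← List.toFinset_card_of_nodup (hp.edges_nodup.filter _)]
  congr 1
  ext e
  simp only [List.mem_toFinset, List.mem_filter, SimpleGraph.mem_incidenceFinset,
    decide_eq_true_eq]
  refine ⟨fun ⟨he, hxe⟩ ↦ ⟨p.edges_subset_edgeSet he, hxe⟩, fun ⟨he, hxe⟩ ↦ ⟨?_, hxe⟩⟩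
  obtain ⟨y, rfl⟩ := Sym2.mem_iff_exists.1 hxe
  exact hx y he

lemma eq_of_longest_trail [Fintype V] [DecidableRel G.Adj] {u v : V} {p : G.Walk u v}
    (heven : Even (G.degree u)) (hp : p.IsTrail)
    (hmax : ∀ (a b : V) (q : G.Walk a b), q.IsTrail → q.length ≤ p.length) : u = v := by
  classical
  by_contra hne
  rw [← countP_edges_eq_degree hp fun _ ↦ mem_edges_of_longest_trail hp hmax,
    hp.even_countP_edges_iff] at heven
  exact (heven hne).1 rfl

variable [DecidableEq V]

lemma isEulerian_of_longest_closed_trail {u : V} {p : G.Walk u u} (hG : G.Preconnected)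
    (hp : p.IsTrail)
    (hmax : ∀ (a b : V) (q : G.Walk a b), q.IsTrail → q.length ≤ p.length) : p.IsEulerian := by
  have hedges : ∀ x ∈ p.support, ∀ y, G.Adj x y → s(x, y) ∈ p.edges := fun x hx y hxy ↦
    (p.rotate_edges x hx).mem_iff.1 <|
      mem_edges_of_longest_trail (hp.rotate hx) (by simpa using hmax) hxy
  have hsupport : ∀ x, x ∈ p.support := by
    intro x
    by_contra hx
    obtain ⟨q⟩ := hG u x
    obtain ⟨a, -, ha, ha'⟩ := q.exists_boundary_dart {z | z ∈ p.support} p.start_mem_support hx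
    exact ha' (p.snd_mem_support_of_mem_edges (hedges _ ha _ a.adj))
  refine hp.isEulerian_of_forall_mem fun e he ↦ ?_
  induction e with
  | h x y => exact hedges x (hsupport x) y he

theorem exists_isEulerian_of_even_degree [Fintype V] [DecidableRel G.Adj] (hG : G.Connected)
    (heven : ∀ v, Even (G.degree v)) : ∃ (u : V) (p : G.Walk u u), p.IsEulerian := by
  have := hG.nonempty
  obtain ⟨u, v, p, hp, hmax⟩ := SimpleGraph.Walk.exists_isTrail_forall_isTrail_length_le_length G
  obtain rfl := eq_of_longest_trail (heven u) hp hmax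
  exact ⟨u, p, isEulerian_of_longest_closed_trail hG.preconnected hp hmax⟩

lemma bijOn_edges_of_isEulerian {u v : V} {p : G.Walk u v} (hp : p.IsEulerian) :
    Set.BijOn (fun i ↦ s(p.getVert i, p.getVert (i + 1))) (range p.length) G.edgeSet := by
  refine ⟨fun i hi ↦ p.adj_getVert_succ (mem_range.1 hi), fun i hi j hj hij ↦ ?_, fun e he ↦ ?_⟩
  · have hi' : i < p.edges.length := by simpa using hi
    have hj' : j < p.edges.length := by simpa using hj
    refine (hp.isTrail.edges_nodup.getElem_inj_iff (hi := hi') (hj := hj')).1 ?_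
    simpa only [SimpleGraph.Walk.getElem_edges] using hij
  · obtain ⟨i, hi, rfl⟩ := List.mem_iff_getElem.1 (hp.mem_edges_iff.2 he)
    exact ⟨i, by simpa using hi, (SimpleGraph.Walk.getElem_edges hi).symm⟩

end EulerianCircuit

section Rank

variable {ι : Type*}

/-- The rank, counted from `1`, of `i` among the elements of `s` ordered by the key `f`. -/
def keyRank (s : Finset ι) (f : ι → ℕ) (i : ι) : ℕ :=
  Nat.count (· ∈ s.image f) (f i) + 1

variable {s : Finset ι} {f : ι → ℕ} {i j : ι}

lemma keyRank_lt_keyRank (hi : i ∈ s) (h : f i < f j) : keyRank s f i < keyRank s f j :=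
  Nat.succ_lt_succ (Nat.count_strict_mono (mem_image_of_mem f hi) h)

lemma keyRank_eq_add_one (hi : i ∈ s) (h : f j = f i + 1) :
    keyRank s f j = keyRank s f i + 1 := by
  rw [keyRank, h, Nat.count_succ, if_pos (mem_image_of_mem f hi), keyRank]

lemma bijOn_keyRank (hf : Set.InjOn f s) :
    Set.BijOn (keyRank s f) s (Set.Icc 1 #s) := by
  have hmaps : Set.MapsTo (keyRank s f) s (Icc 1 #s) := by
    intro i hi
    have hlt := Nat.count_lt_card (s.image f).finite_toSet (mem_image_of_mem f hi)
    rw [finite_toSet_toFinset, card_image_of_injOn hf] at hlt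
    exact mem_coe.2 (mem_Icc.2 ⟨Nat.le_add_left _ _, hlt⟩)
  have hinj : Set.InjOn (keyRank s f) s := fun i hi j hj hij ↦
    hf hi hj <| Nat.count_injective (mem_image_of_mem f hi) (mem_image_of_mem f hj)
      (Nat.succ_injective hij)
  rw [← coe_Icc]
  exact ⟨hmaps, hinj, surjOn_of_injOn_of_card_le _ hmaps hinj (by simp)⟩

end Rank

section CutLabeling

/-- `F` is a signed labeling, with absolute values `1, …, m`, of the edges `0, …, m - 1` of a closed
trail. Position `k` is the vertex between the edges `k` and `k + 1`, where edge `m` is edge `0`; the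
sign says whether an edge is traversed forwards or backwards, so that passing through position `k`
contributes `F k - F (k + 1)` to a vertex-sum. This contribution is `-1` away from the set `P` of
cut positions, while on `P` the contributions are large and far apart. -/
structure IsCutLabeling (m : ℕ) (P : Finset ℕ) (F : ℕ → ℤ) : Prop where
  subset : P ⊆ range m
  closed : F m = F 0
  bijOn : Set.BijOn (fun k ↦ |F k|) (range m) (Set.Icc 1 (m : ℤ))
  sub_eq : ∀ k < m, k ∉ P → F k - F (k + 1) = -1
  three_le : ∀ k ∈ P, 3 ≤ |F k - F (k + 1)|
  two_le : ∀ k ∈ P, ∀ l ∈ P, k ≠ l → 2 ≤ |(F k - F (k + 1)) - (F l - F (l + 1))|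

/-- The position in the block order of the `s`-th of `2 * q` cyclically arranged segments. Two
neighboring segments are in positions `r` and `r + 2`, except for `0, 1` and `2 * q - 2, 2 * q - 1`:
the cyclic arrangement goes up through the even positions and back down through the odd ones. -/
def zigzag (q s : ℕ) : ℕ := if s < q then 2 * s else 2 * (2 * q - 1 - s) + 1

lemma zigzag_injOn (q : ℕ) : Set.InjOn (zigzag q) (Set.Iio (2 * q)) := by
  intro s hs t ht hst
  simp only [Set.mem_Iio] at hs ht
  unfold zigzag at hst
  split_ifs at hst <;> omega

lemma zigzag_add_one_mod {q s : ℕ} (hs : s < 2 * q) :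
    (s + 1 < q ∧ zigzag q s = 2 * s ∧ zigzag q ((s + 1) % (2 * q)) = 2 * s + 2) ∨
    (s + 1 = q ∧ zigzag q s + 2 = 2 * q ∧ zigzag q ((s + 1) % (2 * q)) + 1 = 2 * q) ∨
    (q ≤ s ∧ s + 1 < 2 * q ∧ zigzag q s + 2 * s + 1 = 4 * q ∧
      zigzag q ((s + 1) % (2 * q)) + 2 = zigzag q s) ∨
    (s + 1 = 2 * q ∧ zigzag q s = 1 ∧ zigzag q ((s + 1) % (2 * q)) = 0) := by
  rcases (Nat.succ_le_of_lt hs).lt_or_eq with h | h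
  · rw [Nat.mod_eq_of_lt h]
    unfold zigzag
    split_ifs <;> omega
  · rw [← Nat.succ_eq_add_one, h, Nat.mod_self]
    unfold zigzag
    split_ifs <;> omega

lemma zigzag_pair_comparable {q s t : ℕ} (hs : s < 2 * q) (ht : t < 2 * q) (hst : s ≠ t)
    (hpar : Even s ↔ Even t) :
    let a := zigzag q s; let a' := zigzag q ((s + 1) % (2 * q))
    let b := zigzag q t; let b' := zigzag q ((t + 1) % (2 * q))
    (a < b ∧ a' < b' ∨ a < b' ∧ a' < b) ∨ (b < a ∧ b' < a' ∨ b' < a ∧ b < a') := by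
  intro a a' b b'
  have hpar' : s % 2 = t % 2 := by rw [Nat.even_iff, Nat.even_iff] at hpar; omega
  rcases zigzag_add_one_mod hs with h | h | h | h <;>
    rcases zigzag_add_one_mod ht with h' | h' | h' | h' <;>
    omega

/-- The sorting key of edge `k`: blocks are ordered by `zigzag`, and within a block the edges are
increasing in segments of even index and decreasing in segments of odd index. The segment index of
`k` is the number of cut positions before `k`. -/
def segmentKey (m q : ℕ) (P : Finset ℕ) (k : ℕ) : ℕ :=
  zigzag q (Nat.count (· ∈ P) k) * m + if Even (Nat.count (· ∈ P) k) then k else m - 1 - k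

variable {m q k l : ℕ} {P : Finset ℕ}

lemma segmentKey_lt_segmentKey (hk : k < m)
    (h : zigzag q (Nat.count (· ∈ P) k) < zigzag q (Nat.count (· ∈ P) l)) :
    segmentKey m q P k < segmentKey m q P l := by
  have hoffset : (if Even (Nat.count (· ∈ P) k) then k else m - 1 - k) < m := by
    split_ifs <;> omega
  calc segmentKey m q P k < (zigzag q (Nat.count (· ∈ P) k) + 1) * m := by
        rw [segmentKey, add_one_mul]; omega
    _ ≤ zigzag q (Nat.count (· ∈ P) l) * m := Nat.mul_le_mul_right m h
    _ ≤ segmentKey m q P l := Nat.le_add_right _ _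

lemma count_mem_eq_card (hP : P ⊆ range m) : Nat.count (· ∈ P) m = #P := by
  rw [Nat.count_eq_card_filter_range, filter_mem_eq_inter, inter_eq_right.2 hP]

lemma count_mem_lt_card (hP : P ⊆ range m) (hlast : m - 1 ∈ P) (hk : k < m) :
    Nat.count (· ∈ P) k < #P := by
  rw [← count_mem_eq_card hP]
  exact (Nat.count_monotone _ (Nat.le_sub_one_of_lt hk)).trans_lt
    (Nat.count_strict_mono hlast (by omega))

lemma count_mem_succ_mod (hP : P ⊆ range m) (hlast : m - 1 ∈ P) (hk : k ∈ P) :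
    Nat.count (· ∈ P) ((k + 1) % m) = (Nat.count (· ∈ P) k + 1) % #P := by
  have hcount : Nat.count (· ∈ P) (k + 1) = Nat.count (· ∈ P) k + 1 := by
    rw [Nat.count_succ, if_pos hk]
  rcases (Nat.succ_le_of_lt (mem_range.1 (hP hk))).lt_or_eq with h | h
  · rw [Nat.mod_eq_of_lt h, ← hcount, Nat.mod_eq_of_lt (count_mem_lt_card hP hlast h)]
  · rw [← hcount, ← Nat.succ_eq_add_one, h, Nat.mod_self, count_mem_eq_card hP, Nat.mod_self,
      Nat.count_zero]

lemma count_mem_succ_mod_two (hP : P ⊆ range m) (hlast : m - 1 ∈ P) (heven : Even #P)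
    (hk : k ∈ P) :
    Nat.count (· ∈ P) ((k + 1) % m) % 2 = (Nat.count (· ∈ P) k + 1) % 2 := by
  rw [count_mem_succ_mod hP hlast hk, Nat.mod_mod_of_dvd _ heven.two_dvd]

lemma segmentKey_injOn (hP : P ⊆ range m) (hlast : m - 1 ∈ P) (hcard : #P = 2 * q) :
    Set.InjOn (segmentKey m q P) (range m) := by
  intro k hk l hl hkl
  have hk' : k < m := mem_range.1 hk
  have hl' : l < m := mem_range.1 hl
  have hblock : zigzag q (Nat.count (· ∈ P) k) = zigzag q (Nat.count (· ∈ P) l) := by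
    by_contra hne
    rcases lt_or_gt_of_ne hne with h | h
    · exact (segmentKey_lt_segmentKey hk' h).ne hkl
    · exact (segmentKey_lt_segmentKey hl' h).ne' hkl
  have hsegment := zigzag_injOn q (hcard ▸ count_mem_lt_card hP hlast hk')
    (hcard ▸ count_mem_lt_card hP hlast hl') hblock
  rw [segmentKey, segmentKey, hsegment, Nat.add_left_cancel_iff] at hkl
  split_ifs at hkl <;> omega

/-- The absolute value of the label of edge `k`. -/
def segmentLabel (m q : ℕ) (P : Finset ℕ) (k : ℕ) : ℕ :=
  keyRank (range m) (segmentKey m q P) k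

/-- The label of edge `k`, read cyclically modulo `m`, with positive sign in segments of even index
and negative sign in segments of odd index. -/
def signedLabel (m q : ℕ) (P : Finset ℕ) (k : ℕ) : ℤ :=
  (-1) ^ Nat.count (· ∈ P) (k % m) * segmentLabel m q P (k % m)

lemma bijOn_segmentLabel (hP : P ⊆ range m) (hlast : m - 1 ∈ P) (hcard : #P = 2 * q) :
    Set.BijOn (segmentLabel m q P) (range m) (Set.Icc 1 m) := by
  simpa using! bijOn_keyRank (segmentKey_injOn hP hlast hcard)

lemma segmentLabel_lt_segmentLabel (hk : k < m)
    (h : zigzag q (Nat.count (· ∈ P) k) < zigzag q (Nat.count (· ∈ P) l)) :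
    segmentLabel m q P k < segmentLabel m q P l :=
  keyRank_lt_keyRank (mem_range.2 hk) (segmentKey_lt_segmentKey hk h)

lemma abs_signedLabel (hk : k < m) : |signedLabel m q P k| = segmentLabel m q P k := by
  rw [signedLabel, Nat.mod_eq_of_lt hk, abs_mul, abs_neg_one_pow, one_mul, Nat.abs_cast]

lemma bijOn_abs_signedLabel (hP : P ⊆ range m) (hlast : m - 1 ∈ P) (hcard : #P = 2 * q) :
    Set.BijOn (fun k ↦ |signedLabel m q P k|) (range m) (Set.Icc 1 (m : ℤ)) := by
  have hcast : Set.BijOn ((↑) : ℕ → ℤ) (Set.Icc 1 m) (Set.Icc 1 (m : ℤ)) := by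
    simpa only [Nat.image_cast_int_Icc, Nat.cast_one] using
      (Nat.cast_injective (R := ℤ)).injOn.bijOn_image (s := Set.Icc 1 m)
  exact (hcast.comp (bijOn_segmentLabel hP hlast hcard)).congr fun k hk ↦
    (abs_signedLabel (mem_range.1 hk)).symm

lemma signedLabel_sub_of_notMem (hlast : m - 1 ∈ P) (hk : k < m) (hkP : k ∉ P) :
    signedLabel m q P k - signedLabel m q P (k + 1) = -1 := by
  have hk' : k + 1 < m := by
    have : k ≠ m - 1 := fun h ↦ hkP (h ▸ hlast)
    omega
  have hcount : Nat.count (· ∈ P) (k + 1) = Nat.count (· ∈ P) k := by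
    rw [Nat.count_succ, if_neg hkP, add_zero]
  rw [signedLabel, signedLabel, Nat.mod_eq_of_lt hk, Nat.mod_eq_of_lt hk', hcount]
  rcases Nat.even_or_odd (Nat.count (· ∈ P) k) with hpar | hpar
  · have : segmentLabel m q P (k + 1) = segmentLabel m q P k + 1 :=
      keyRank_eq_add_one (mem_range.2 hk) <| by
        rw [segmentKey, segmentKey, hcount, if_pos hpar, if_pos hpar, add_assoc]
    rw [hpar.neg_one_pow, this]
    push_cast
    ring
  · have : segmentLabel m q P k = segmentLabel m q P (k + 1) + 1 :=
      keyRank_eq_add_one (mem_range.2 hk') <| by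
        rw [segmentKey, segmentKey, hcount, if_neg (Nat.not_even_iff_odd.2 hpar),
          if_neg (Nat.not_even_iff_odd.2 hpar)]
        omega
    rw [hpar.neg_one_pow, this]
    push_cast
    ring

lemma signedLabel_sub_of_mem (hP : P ⊆ range m) (hlast : m - 1 ∈ P) (heven : Even #P)
    (hk : k ∈ P) :
    signedLabel m q P k - signedLabel m q P (k + 1) = (-1) ^ Nat.count (· ∈ P) k *
      ((segmentLabel m q P k + segmentLabel m q P ((k + 1) % m) : ℕ) : ℤ) := by
  have hsign : (-1 : ℤ) ^ Nat.count (· ∈ P) ((k + 1) % m) = -(-1) ^ Nat.count (· ∈ P) k := by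
    rw [neg_one_pow_eq_pow_mod_two, count_mem_succ_mod_two hP hlast heven hk,
      ← neg_one_pow_eq_pow_mod_two, pow_succ, mul_neg_one]
  rw [signedLabel, signedLabel, hsign, Nat.mod_eq_of_lt (mem_range.1 (hP hk))]
  push_cast
  ring

lemma three_le_segmentLabel_add (hP : P ⊆ range m) (hlast : m - 1 ∈ P) (hcard : #P = 2 * q)
    (hk : k ∈ P) : 3 ≤ segmentLabel m q P k + segmentLabel m q P ((k + 1) % m) := by
  have hkm := hP hk
  have hkm' : (k + 1) % m ∈ range m :=
    mem_range.2 (Nat.mod_lt _ (Nat.zero_lt_of_lt (mem_range.1 hkm)))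
  have hbij := bijOn_segmentLabel hP hlast hcard
  have hne : segmentLabel m q P k ≠ segmentLabel m q P ((k + 1) % m) := by
    intro h
    have hparity := count_mem_succ_mod_two hP hlast (hcard ▸ even_two_mul q) hk
    rw [← hbij.injOn hkm hkm' h] at hparity
    omega
  have h₁ := (hbij.mapsTo hkm).1
  have h₂ := (hbij.mapsTo hkm').1
  omega

lemma segmentLabel_add_separated (hP : P ⊆ range m) (hlast : m - 1 ∈ P) (hcard : #P = 2 * q)
    (hk : k ∈ P) (hl : l ∈ P) (hkl : k ≠ l)
    (hpar : Even (Nat.count (· ∈ P) k) ↔ Even (Nat.count (· ∈ P) l)) :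
    let x := segmentLabel m q P k + segmentLabel m q P ((k + 1) % m)
    let y := segmentLabel m q P l + segmentLabel m q P ((l + 1) % m)
    x + 2 ≤ y ∨ y + 2 ≤ x := by
  have hkm := mem_range.1 (hP hk)
  have hlm := mem_range.1 (hP hl)
  have hkm' : (k + 1) % m < m := Nat.mod_lt _ (Nat.zero_lt_of_lt hkm)
  have hlm' : (l + 1) % m < m := Nat.mod_lt _ (Nat.zero_lt_of_lt hlm)
  have hcomparable := zigzag_pair_comparable (hcard ▸ count_mem_lt_card hP hlast hkm)
    (hcard ▸ count_mem_lt_card hP hlast hlm) (fun h ↦ hkl (Nat.count_injective hk hl h)) hpar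
  rw [← hcard, ← count_mem_succ_mod hP hlast hk, ← count_mem_succ_mod hP hlast hl]
    at hcomparable
  have hlt {a b : ℕ} (ha : a < m)
      (h : zigzag q (Nat.count (· ∈ P) a) < zigzag q (Nat.count (· ∈ P) b)) :
      segmentLabel m q P a < segmentLabel m q P b := segmentLabel_lt_segmentLabel ha h
  rcases hcomparable with (⟨h, h'⟩ | ⟨h, h'⟩) | (⟨h, h'⟩ | ⟨h, h'⟩)
  · have := hlt hkm h; have := hlt hkm' h'; omega
  · have := hlt hkm h; have := hlt hkm' h'; omega
  · have := hlt hlm h; have := hlt hlm' h'; omega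
  · have := hlt hlm' h; have := hlt hlm h'; omega

theorem isCutLabeling_signedLabel (hP : P ⊆ range m) (hlast : m - 1 ∈ P) (hcard : #P = 2 * q) :
    IsCutLabeling m P (signedLabel m q P) where
  subset := hP
  closed := by rw [signedLabel, signedLabel, Nat.mod_self, Nat.zero_mod]
  bijOn := bijOn_abs_signedLabel hP hlast hcard
  sub_eq k hk hkP := signedLabel_sub_of_notMem hlast hk hkP
  three_le k hk := by
    rw [signedLabel_sub_of_mem hP hlast (hcard ▸ even_two_mul q) hk, abs_mul, abs_neg_one_pow,
      one_mul, Nat.abs_cast]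
    exact_mod_cast three_le_segmentLabel_add hP hlast hcard hk
  two_le k hk l hl hkl := by
    have heven : Even #P := hcard ▸ even_two_mul q
    have hk3 := three_le_segmentLabel_add hP hlast hcard hk
    have hl3 := three_le_segmentLabel_add hP hlast hcard hl
    have hsep := segmentLabel_add_separated hP hlast hcard hk hl hkl
    rw [signedLabel_sub_of_mem hP hlast heven hk, signedLabel_sub_of_mem hP hlast heven hl,
      le_abs']
    rcases Nat.even_or_odd (Nat.count (· ∈ P) k) with hk' | hk' <;>
      rcases Nat.even_or_odd (Nat.count (· ∈ P) l) with hl' | hl' <;>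
      simp only [hk'.neg_one_pow, hl'.neg_one_pow, ← Nat.not_odd_iff_even, hk', hl', not_true,
        iff_self, true_imp_iff] at hsep ⊢ <;>
      omega

end CutLabeling

section CutPositions

variable {m k : ℕ} {P s t : Finset ℕ} {F : ℕ → ℤ}

lemma IsCutLabeling.sum_sub_eq (hF : IsCutLabeling m P F) (hs : s ⊆ range m)
    (hsP : Disjoint s P) : ∑ k ∈ s, (F k - F (k + 1)) = -#s := by
  have hterm : ∀ k ∈ s, F k - F (k + 1) = -1 := fun k hk ↦
    hF.sub_eq k (mem_range.1 (hs hk)) (disjoint_left.1 hsP hk)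
  rw [sum_congr rfl hterm, sum_const, nsmul_eq_mul, mul_neg_one]

lemma IsCutLabeling.sum_sub_eq_of_inter_eq_singleton (hF : IsCutLabeling m P F)
    (hs : s ⊆ range m) (hk : k ∈ s) (hsP : ∀ l ∈ s, l ∈ P → l = k) :
    ∑ l ∈ s, (F l - F (l + 1)) = F k - F (k + 1) + 1 - #s := by
  have hdisjoint : Disjoint (s.erase k) P :=
    disjoint_left.2 fun l hl hlP ↦ ne_of_mem_erase hl (hsP l (mem_of_mem_erase hl) hlP)
  rw [← add_sum_erase _ _ hk, hF.sum_sub_eq ((erase_subset k s).trans hs) hdisjoint,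
    cast_card_erase_of_mem hk]
  ring

/-- With all but at most one visit contributing `-1`, the sizes of `s` and `t` shift the sums by
amounts too close to each other to close the gaps between the contributions at the cut positions. -/
lemma IsCutLabeling.sum_sub_ne_sum_sub (hF : IsCutLabeling m P F) (hs : s ⊆ range m)
    (ht : t ⊆ range m) (hst : Disjoint s t) (hk : k ∈ s) (hkP : k ∈ P)
    (hsP : ∀ l ∈ s, l ∈ P → l = k) (htP : ∀ l ∈ t, l ∈ P → ∀ l' ∈ t, l' ∈ P → l' = l)
    (hcard : #s ≤ #t + 1) (hcard' : #t ≤ #s + 1) :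
    ∑ l ∈ s, (F l - F (l + 1)) ≠ ∑ l ∈ t, (F l - F (l + 1)) := by
  rw [hF.sum_sub_eq_of_inter_eq_singleton hs hk hsP]
  by_cases hdisjoint : Disjoint t P
  · rw [hF.sum_sub_eq ht hdisjoint]
    have := le_abs'.1 (hF.three_le k hkP)
    omega
  · obtain ⟨l, hl, hlP⟩ := not_disjoint_iff.1 hdisjoint
    have hkl : k ≠ l := disjoint_iff_ne.1 hst k hk l hl
    rw [hF.sum_sub_eq_of_inter_eq_singleton ht hl (htP l hl hlP)]
    have := le_abs'.1 (hF.two_le k hkP l hlP hkl)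
    omega

lemma exists_even_card_injOn {ι V : Type*} [Nontrivial V] {f : ι → V} {s : Finset ι}
    {a : ι} (ha : a ∈ s) (hf : Set.SurjOn f s Set.univ) :
    ∃ P ⊆ s, a ∈ P ∧ Even #P ∧ Set.InjOn f P ∧ (f '' P)ᶜ.Subsingleton := by
  classical
  obtain ⟨T', haT, hT's, hT'⟩ := (Set.bijOn_singleton.2 rfl : Set.BijOn f {a} {f a})
    |>.exists_extend_of_subset (Set.singleton_subset_iff.2 ha) (Set.subset_univ _) hf
  obtain ⟨T, rfl⟩ := (s.finite_toSet.subset hT's).exists_finset_coe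
  rcases Nat.even_or_odd #T with hT | hT
  · exact ⟨T, hT's, haT rfl, hT, hT'.injOn, by simp [hT'.image_eq]⟩
  obtain ⟨v, hv⟩ := exists_ne (f a)
  obtain ⟨b, hb, rfl⟩ := hT'.surjOn (Set.mem_univ v)
  refine ⟨T.erase b, (erase_subset b T).trans hT's,
    mem_erase.2 ⟨fun h ↦ hv (h ▸ rfl), haT rfl⟩, ?_, hT'.injOn.mono (erase_subset b T), ?_⟩
  · rw [card_erase_of_mem hb]
    exact hT.tsub_odd odd_one
  · refine (Set.subsingleton_singleton (a := f b)).anti fun u hu ↦ ?_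
    obtain ⟨c, hc, rfl⟩ := hT'.surjOn (Set.mem_univ u)
    by_contra hcb
    exact hu ⟨c, mem_erase.2 ⟨fun h ↦ hcb (h ▸ rfl), hc⟩, rfl⟩

end CutPositions

section Orientation

variable {V ι : Type*} {G : SimpleGraph V} {s : Finset ι} {arc : ι → V × V}

lemma card_eq_card_edgeFinset [Fintype G.edgeSet] {e : ι → Sym2 V}
    (he : Set.BijOn e s G.edgeSet) : #s = #G.edgeFinset :=
  card_nbij e (by simpa using! he.mapsTo) he.injOn (by simpa using he.surjOn)

variable [DecidableEq V]

lemma isOrientation_image (harc : Set.BijOn (fun i ↦ s((arc i).1, (arc i).2)) s G.edgeSet) :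
    IsOrientation G (s.image arc) := by
  have hadj {u v : V} (h : (u, v) ∈ s.image arc) : G.Adj u v := by
    obtain ⟨i, hi, hi'⟩ := mem_image.1 h
    simpa [hi'] using harc.mapsTo hi
  refine ⟨fun u v ↦ ⟨fun h ↦ ?_, ?_⟩, fun u v ⟨h, h'⟩ ↦ ?_⟩
  · obtain ⟨i, hi, hi'⟩ := harc.surjOn (G.mem_edgeSet.2 h)
    rcases Sym2.eq_iff.1 hi' with ⟨rfl, rfl⟩ | ⟨rfl, rfl⟩
    · exact Or.inl (mem_image_of_mem arc hi)
    · exact Or.inr (mem_image_of_mem arc hi)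
  · rintro (h | h)
    exacts [hadj h, (hadj h).symm]
  · obtain ⟨i, hi, hi'⟩ := mem_image.1 h
    obtain ⟨j, hj, hj'⟩ := mem_image.1 h'
    have hij : i = j := harc.injOn hi hj (by simp only [hi', hj', Sym2.eq_swap])
    subst hij
    exact (hadj h).ne (congrArg Prod.fst (hi'.symm.trans hj'))

lemma vertexSum_image (harc : Set.InjOn arc s) (c : V × V → ℤ) (u : V) :
    vertexSum (s.image arc) c u =
      ∑ i ∈ s, ((if (arc i).2 = u then c (arc i) else 0) -
        if (arc i).1 = u then c (arc i) else 0) := by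
  rw [vertexSum, sum_filter, sum_filter, sum_image harc, sum_image harc, sum_sub_distrib]

end Orientation

section ClosedSequence

variable {V : Type*} {w : ℕ → V} {m : ℕ}

/-- The `i`-th step of the sequence `w`, directed forwards if `F i` is positive and backwards
otherwise. -/
def signedArc (w : ℕ → V) (F : ℕ → ℤ) (i : ℕ) : V × V :=
  if 0 < F i then (w i, w (i + 1)) else (w (i + 1), w i)

lemma sym2_signedArc (F : ℕ → ℤ) (i : ℕ) :
    s((signedArc w F i).1, (signedArc w F i).2) = s(w i, w (i + 1)) := by
  unfold signedArc
  split_ifs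
  exacts [rfl, Sym2.eq_swap]

lemma sum_range_succ_eq_of_closed {M : Type*} [AddCommGroup M] {g : ℕ → M} (hg : g m = g 0) :
    ∑ i ∈ range m, g (i + 1) = ∑ i ∈ range m, g i := by
  rw [← sub_eq_zero, ← sum_sub_distrib, sum_range_sub, hg, sub_self]

variable [DecidableEq V]

/-- The positions at which the closed sequence `w` of length `m` visits `u`, where position `k` is
the one after step `k`. -/
def visits (w : ℕ → V) (m : ℕ) (u : V) : Finset ℕ := {k ∈ range m | w (k + 1) = u}

lemma card_filter_eq_card_visits (hw : w m = w 0) (u : V) :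
    #{k ∈ range m | w k = u} = #(visits w m u) := by
  have := sum_range_succ_eq_of_closed (m := m) (g := fun k ↦ if w k = u then (1 : ℤ) else 0)
    (by rw [hw])
  simpa only [sum_boole, Nat.cast_inj] using! this.symm

lemma degree_eq_two_mul_card_visits [Fintype V] {G : SimpleGraph V} [DecidableRel G.Adj]
    (hw : w m = w 0) (hedges : Set.BijOn (fun i ↦ s(w i, w (i + 1))) (range m) G.edgeSet)
    (u : V) : G.degree u = 2 * #(visits w m u) := by
  have hincidence : G.incidenceFinset u =
      ({k ∈ range m | w k = u} ∪ visits w m u).image fun i ↦ s(w i, w (i + 1)) := by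
    ext e
    simp only [SimpleGraph.incidenceFinset_eq_filter, mem_filter, SimpleGraph.mem_edgeFinset,
      ← hedges.image_eq, Set.mem_image, mem_image, mem_union, visits, ← and_or_left, coe_range,
      Set.mem_Iio, mem_range]
    constructor
    · rintro ⟨⟨i, hi, rfl⟩, hu⟩
      exact ⟨i, ⟨hi, (Sym2.mem_iff.1 hu).imp Eq.symm Eq.symm⟩, rfl⟩
    · rintro ⟨i, ⟨hi, hu⟩, rfl⟩
      exact ⟨⟨i, hi, rfl⟩, Sym2.mem_iff.2 (hu.imp Eq.symm Eq.symm)⟩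
  have hdisjoint : Disjoint {k ∈ range m | w k = u} (visits w m u) :=
    disjoint_filter.2 fun i hi h h' ↦
      (G.mem_edgeSet.1 (hedges.mapsTo hi)).ne (h.trans h'.symm)
  have hinj : Set.InjOn (fun i ↦ s(w i, w (i + 1)))
      ({k ∈ range m | w k = u} ∪ visits w m u : Finset ℕ) :=
    hedges.injOn.mono (union_subset (filter_subset _ _) (filter_subset _ _))
  rw [← SimpleGraph.card_incidenceFinset_eq_degree, hincidence, card_image_of_injOn hinj,
    card_union_of_disjoint hdisjoint, card_filter_eq_card_visits hw, two_mul]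

lemma vertexSum_signedArc {F : ℕ → ℤ} (hw : w m = w 0) (hF : F m = F 0)
    (harc : Set.InjOn (signedArc w F) (range m)) {c : V × V → ℤ}
    (hc : ∀ i ∈ range m, c (signedArc w F i) = |F i|) (u : V) :
    vertexSum ((range m).image (signedArc w F)) c u =
      ∑ k ∈ visits w m u, (F k - F (k + 1)) := by
  have hterm : ∀ i ∈ range m,
      (if (signedArc w F i).2 = u then c (signedArc w F i) else 0) -
        (if (signedArc w F i).1 = u then c (signedArc w F i) else 0) =
      (if w (i + 1) = u then F i else 0) - if w i = u then F i else 0 := by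
    intro i hi
    rw [hc i hi]
    by_cases hpos : 0 < F i
    · rw [signedArc, if_pos hpos, abs_of_pos hpos]
    · rw [signedArc, if_neg hpos, abs_of_nonpos (not_lt.1 hpos)]
      split_ifs <;> ring
  have hshift := sum_range_succ_eq_of_closed (m := m) (g := fun i ↦ if w i = u then F i else 0)
    (by rw [hw, hF])
  rw [vertexSum_image harc, sum_congr rfl hterm, sum_sub_distrib, ← hshift, visits,
    sum_sub_distrib, sum_filter, sum_filter]

theorem exists_isOrientation_vertexSum_eq {G : SimpleGraph V} [Fintype G.edgeSet] {P : Finset ℕ}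
    {F : ℕ → ℤ} (hw : w m = w 0)
    (hedges : Set.BijOn (fun i ↦ s(w i, w (i + 1))) (range m) G.edgeSet)
    (hF : IsCutLabeling m P F) :
    ∃ (A : Finset (V × V)) (c : V × V → ℤ),
      IsOrientation G A ∧
      Set.BijOn c ↑A (Set.Icc 1 (G.edgeFinset.card : ℤ)) ∧
      ∀ u, vertexSum A c u = ∑ k ∈ visits w m u, (F k - F (k + 1)) := by
  have harcs : Set.BijOn (fun i ↦ s((signedArc w F i).1, (signedArc w F i).2)) (range m)
      G.edgeSet := hedges.congr fun i _ ↦ (sym2_signedArc F i).symm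
  have harc : Set.InjOn (signedArc w F) (range m) :=
    Set.InjOn.of_comp (g := fun a : V × V ↦ s(a.1, a.2)) harcs.injOn
  have hm : m = #G.edgeFinset := (card_range m).symm.trans (card_eq_card_edgeFinset hedges)
  let c : V × V → ℤ := fun a ↦ |F (Function.invFunOn (signedArc w F) (range m) a)|
  have hc : ∀ i ∈ range m, c (signedArc w F i) = |F i| := fun i hi ↦
    congrArg (|F ·|) (harc.leftInvOn_invFunOn hi)
  refine ⟨(range m).image (signedArc w F), c, isOrientation_image harcs, ?_,
    vertexSum_signedArc hw hF.closed harc hc⟩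
  rw [coe_image, ← Set.bijOn_comp_iff harc, ← hm]
  exact hF.bijOn.congr fun i hi ↦ (hc i hi).symm

lemma pairwise_sum_visits_ne {P : Finset ℕ} {F : ℕ → ℤ} (hF : IsCutLabeling m P F)
    (hinj : Set.InjOn (fun k ↦ w (k + 1)) P)
    (hcompl : ((fun k ↦ w (k + 1)) '' P)ᶜ.Subsingleton)
    (hvisits : ∀ u v, #(visits w m u) ≤ #(visits w m v) + 1) :
    Pairwise fun u v ↦
      ∑ k ∈ visits w m u, (F k - F (k + 1)) ≠ ∑ k ∈ visits w m v, (F k - F (k + 1)) := by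
  have hunique (u : V) : ∀ k ∈ visits w m u, k ∈ P → ∀ l ∈ visits w m u, l ∈ P → l = k :=
    fun k hk hkP l hl hlP ↦
      hinj hlP hkP ((mem_filter.1 hl).2.trans (mem_filter.1 hk).2.symm)
  have hne_of_mem {u v : V} (huv : u ≠ v) (hu : u ∈ (fun k ↦ w (k + 1)) '' P) :
      ∑ k ∈ visits w m u, (F k - F (k + 1)) ≠ ∑ k ∈ visits w m v, (F k - F (k + 1)) := by
    obtain ⟨k, hkP, rfl⟩ := hu
    have hk : k ∈ visits w m (w (k + 1)) := mem_filter.2 ⟨hF.subset hkP, rfl⟩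
    exact hF.sum_sub_ne_sum_sub (filter_subset _ _) (filter_subset _ _)
      (disjoint_filter.2 fun l _ h h' ↦ huv (h.symm.trans h')) hk hkP (hunique _ k hk hkP)
      (hunique v) (hvisits _ _) (hvisits _ _)
  intro u v huv
  by_cases hu : u ∈ (fun k ↦ w (k + 1)) '' P
  · exact hne_of_mem huv hu
  · exact (hne_of_mem huv.symm (by_contra fun hv ↦ huv (hcompl hu hv))).symm

end ClosedSequence

section Antimagic

variable {V : Type*}

lemma surjOn_of_degree_pos {w : ℕ → V} {m : ℕ} [Fintype V] {G : SimpleGraph V}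
    [DecidableRel G.Adj] (hw : w m = w 0)
    (hedges : Set.BijOn (fun i ↦ s(w i, w (i + 1))) (range m) G.edgeSet)
    (hpos : ∀ u, 0 < G.degree u) : Set.SurjOn (fun k ↦ w (k + 1)) (range m) Set.univ := by
  classical
  intro u _
  have hvisits : 0 < #(visits w m u) := by
    have := degree_eq_two_mul_card_visits hw hedges u ▸ hpos u
    omega
  obtain ⟨k, hk⟩ := card_pos.1 hvisits
  exact ⟨k, mem_filter.1 hk⟩

theorem exists_isCutLabeling [Nontrivial V] {w : ℕ → V} {m : ℕ}
    (hw : Set.SurjOn (fun k ↦ w (k + 1)) (range m) Set.univ) :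
    ∃ (P : Finset ℕ) (F : ℕ → ℤ), IsCutLabeling m P F ∧
      Set.InjOn (fun k ↦ w (k + 1)) P ∧ ((fun k ↦ w (k + 1)) '' P)ᶜ.Subsingleton := by
  have hlast : m - 1 ∈ range m := by
    obtain ⟨v⟩ := Nontrivial.to_nonempty (α := V)
    obtain ⟨k, hk, -⟩ := hw (Set.mem_univ v)
    have := mem_range.1 hk
    exact mem_range.2 (by omega)
  obtain ⟨P, hP, hlastP, heven, hinj, hcompl⟩ := exists_even_card_injOn hlast hw
  obtain ⟨q, hq⟩ := heven.two_dvd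
  exact ⟨P, signedLabel m q P, isCutLabeling_signedLabel hP hlastP hq, hinj, hcompl⟩

variable [DecidableEq V]

lemma exists_antimagic_of_subsingleton (G : SimpleGraph V) [Fintype G.edgeSet]
    [Subsingleton V] :
    ∃ (A : Finset (V × V)) (c : V × V → ℤ),
      IsOrientation G A ∧
      Set.BijOn c ↑A (Set.Icc 1 (G.edgeFinset.card : ℤ)) ∧
      Pairwise fun u v : V => vertexSum A c u ≠ vertexSum A c v := by
  have hG : G.edgeFinset = ∅ := by simp [Subsingleton.elim G ⊥]
  refine ⟨∅, 0, ⟨fun u v ↦ ?_, by simp⟩, by simp [hG], Subsingleton.pairwise⟩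
  simp [Subsingleton.elim u v]

variable [Fintype V]

theorem connected_two_degrees_admits_antimagic_orientation_general
    (G : SimpleGraph V) [DecidableRel G.Adj] (hconn : G.Connected)
    (heven : ∀ v : V, Even (G.degree v))
    (hdeg : ∀ u v : V, G.degree u ≤ G.degree v + 2) :
    ∃ (A : Finset (V × V)) (c : V × V → ℤ),
      IsOrientation G A ∧
      Set.BijOn c ↑A (Set.Icc 1 (G.edgeFinset.card : ℤ)) ∧
      Pairwise fun u v : V => vertexSum A c u ≠ vertexSum A c v := by
  rcases subsingleton_or_nontrivial V with _ | _
  · exact exists_antimagic_of_subsingleton G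
  obtain ⟨_, p, hp⟩ := exists_isEulerian_of_even_degree hconn heven
  have hclosed : p.getVert p.length = p.getVert 0 := by simp
  have hedges := bijOn_edges_of_isEulerian hp
  have hdegree := degree_eq_two_mul_card_visits hclosed hedges
  have hvisits (u v : V) : #(visits p.getVert p.length u) ≤ #(visits p.getVert p.length v) + 1 := by
    have := hdeg u v
    rw [hdegree, hdegree] at this
    omega
  have hsurj := surjOn_of_degree_pos hclosed hedges fun u ↦
    hconn.preconnected.degree_pos_of_nontrivial u
  obtain ⟨P, F, hF, hinj, hcompl⟩ := exists_isCutLabeling hsurj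
  obtain ⟨A, c, hA, hc, hsum⟩ := exists_isOrientation_vertexSum_eq hclosed hedges hF
  refine ⟨A, c, hA, hc, ?_⟩
  simp only [hsum]
  exact pairwise_sum_visits_ne hF hinj hcompl hvisits

end Antimagic

/-- For d ≥ 2, every connected simple graph in which every vertex has degree 2d or 2d − 2
admits an antimagic orientation. -/
theorem connected_two_degrees_admits_antimagic_orientation
    {V : Type*} [Fintype V] [DecidableEq V]
    (G : SimpleGraph V) [DecidableRel G.Adj] (d : ℕ) (hd : 2 ≤ d)
    (hconn : G.Connected)
    (hdeg : ∀ v : V, G.degree v = 2 * d ∨ G.degree v = 2 * d - 2) :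
    ∃ (A : Finset (V × V)) (c : V × V → ℤ),
      IsOrientation G A ∧
      Set.BijOn c ↑A (Set.Icc 1 (G.edgeFinset.card : ℤ)) ∧
      Pairwise fun u v : V => vertexSum A c u ≠ vertexSum A c v := by
  have heven (v : V) : Even (G.degree v) := by
    rcases hdeg v with h | h
    · exact ⟨d, by omega⟩
    · exact ⟨d - 1, by omega⟩
  exact connected_two_degrees_admits_antimagic_orientation_general G hconn heven fun u v ↦ by
    rcases hdeg u with h | h <;> rcases hdeg v with h' | h' <;> omega
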